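/- A bijection Ψ of M_2(F_q) is an automorphism of the left-ideal relation digraph of M_2(F_q) if and only if Ψ preserves rank, i.e., rank(Ψ(X)) = rank(X) for every X ∈ M_2(F_q). -/

import Mathlib

/-- The left ideal of `M_2(F)` generated by `X`: the set of all `C * X`. -/
def leftIdeal {F : Type*} [Field F]
    (X : Matrix (Fin 2) (Fin 2) F) : Set (Matrix (Fin 2) (Fin 2) F) :=
  {A | ∃ C : Matrix (Fin 2) (Fin 2) F, A = C * X}

/-!
The left ideal generated by `X` consists of the matrices whose rows lie in the row space of `X`, so
the digraph is the strict inclusion order of row spaces. In the plane, subspaces of different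
dimensions are comparable, because one of the two subspaces is `⊥` or `⊤`: the edges are the pairs
with `rank X < rank Y`. If a map preserving these pairs lowered the rank of some `X`, iterating it
would lower the rank indefinitely, and likewise for raising it.
-/

open Module Submodule

section WellFounded

variable {α β : Type*} {Ψ : α → α}

theorem not_rel_map_self_of_wellFounded {r : α → α → Prop} (hr : WellFounded r)
    (hΨ : ∀ a b, r a b → r (Ψ a) (Ψ b)) (a : α) : ¬ r (Ψ a) a :=
  hr.induction (C := fun a ↦ ¬ r (Ψ a) a) a fun a ih h ↦ ih (Ψ a) h (hΨ _ _ h)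

theorem apply_map_eq_of_lt_imp_lt [LinearOrder β] {f : α → β} (hf : (Set.range f).Finite)
    (hΨ : ∀ a b, f a < f b → f (Ψ a) < f (Ψ b)) (a : α) : f (Ψ a) = f a := by
  have wf_lt : WellFounded fun a b ↦ f a < f b := Set.wellFoundedOn_range.1 hf.wellFoundedOn
  have wf_gt : WellFounded fun a b ↦ f b < f a :=
    Set.wellFoundedOn_range.1 (hf.wellFoundedOn (r := (· > ·)))
  have not_lt : ¬ f (Ψ a) < f a := not_rel_map_self_of_wellFounded wf_lt hΨ a
  have not_gt : ¬ f a < f (Ψ a) := not_rel_map_self_of_wellFounded wf_gt (fun a b ↦ hΨ b a) a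
  exact le_antisymm (le_of_not_gt not_gt) (le_of_not_gt not_lt)

end WellFounded

theorem submodule_lt_iff_finrank_lt_of_finrank_le_two {K V : Type*} [DivisionRing K]
    [AddCommGroup V] [Module K V] [FiniteDimensional K V] (hV : finrank K V ≤ 2)
    {U W : Submodule K V} : U < W ↔ finrank K U < finrank K W := by
  refine ⟨finrank_lt_finrank_of_lt, fun h ↦ lt_of_le_of_ne ?_ fun hUW ↦ h.ne (by rw [hUW])⟩
  have hWV : finrank K W ≤ finrank K V := W.finrank_le
  obtain hU | hW : finrank K U = 0 ∨ finrank K W = finrank K V := by lia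
  · simp [finrank_eq_zero.1 hU]
  · simp [eq_top_of_finrank_eq hW]

section RowSpace

variable {l m n R : Type*}

/-- The row space of a matrix, as a left submodule of the row vectors; it decides which matrices are
left multiples of which. -/
def rowSpace [Semiring R] (A : Matrix m n R) : Submodule R (n → R) :=
  span R (Set.range A.row)

theorem exists_eq_mul_iff_rowSpace_le [Fintype m] [Semiring R] {A : Matrix l n R}
    {B : Matrix m n R} : (∃ C : Matrix l m R, A = C * B) ↔ rowSpace A ≤ rowSpace B := by
  simp only [rowSpace, span_le, Set.range_subset_iff, ← range_vecMulLinear]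
  constructor
  · rintro ⟨C, rfl⟩ i
    exact ⟨C.row i, rfl⟩
  · intro h
    choose C hC using h
    exact ⟨Matrix.of C, funext fun i ↦ (hC i).symm⟩

theorem finrank_rowSpace [Finite m] [Fintype n] [Field R] (A : Matrix m n R) :
    finrank R (rowSpace A) = A.rank :=
  A.rank_eq_finrank_span_row.symm

end RowSpace

theorem finite_range_rank {m n R : Type*} [Fintype n] [CommSemiring R] [StrongRankCondition R] :
    (Set.range (Matrix.rank : Matrix m n R → ℕ)).Finite :=
  (Set.finite_Iic (Fintype.card n)).subset <| Set.range_subset_iff.2 Matrix.rank_le_card_width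

section LeftIdeal

variable {F : Type*} [Field F] {X Y : Matrix (Fin 2) (Fin 2) F}

theorem mem_leftIdeal_iff_rowSpace_le : X ∈ leftIdeal Y ↔ rowSpace X ≤ rowSpace Y :=
  exists_eq_mul_iff_rowSpace_le

theorem leftIdeal_subset_iff_rowSpace_le :
    leftIdeal X ⊆ leftIdeal Y ↔ rowSpace X ≤ rowSpace Y := by
  simp only [Set.subset_def, mem_leftIdeal_iff_rowSpace_le]
  exact ⟨fun h ↦ h X le_rfl, fun hXY _ hZX ↦ hZX.trans hXY⟩

theorem leftIdeal_ssubset_iff_rank_lt :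
    leftIdeal X ⊂ leftIdeal Y ↔ X.rank < Y.rank := by
  rw [ssubset_iff_subset_not_subset, leftIdeal_subset_iff_rowSpace_le,
    leftIdeal_subset_iff_rowSpace_le, ← lt_iff_le_not_ge,
    submodule_lt_iff_finrank_lt_of_finrank_le_two (by simp), finrank_rowSpace, finrank_rowSpace]

end LeftIdeal

theorem stmt_16_general {F : Type*} [Field F]
    (Ψ : Matrix (Fin 2) (Fin 2) F → Matrix (Fin 2) (Fin 2) F) :
    (∀ X Y : Matrix (Fin 2) (Fin 2) F,
      leftIdeal X ⊂ leftIdeal Y ↔ leftIdeal (Ψ X) ⊂ leftIdeal (Ψ Y)) ↔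
    (∀ X : Matrix (Fin 2) (Fin 2) F, (Ψ X).rank = X.rank) := by
  simp only [leftIdeal_ssubset_iff_rank_lt]
  constructor
  · intro h
    exact apply_map_eq_of_lt_imp_lt finite_range_rank fun X Y ↦ (h X Y).1
  · intro h X Y
    rw [h X, h Y]

/-- A bijection of `M_2(F_q)` is an automorphism of the left-ideal relation
digraph iff it preserves rank. -/
theorem stmt_16 {F : Type*} [Field F] [Fintype F]
    (Ψ : Matrix (Fin 2) (Fin 2) F → Matrix (Fin 2) (Fin 2) F)
    (hbij : Function.Bijective Ψ) :
    (∀ X Y : Matrix (Fin 2) (Fin 2) F,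
      leftIdeal X ⊂ leftIdeal Y ↔ leftIdeal (Ψ X) ⊂ leftIdeal (Ψ Y)) ↔
    (∀ X : Matrix (Fin 2) (Fin 2) F, (Ψ X).rank = X.rank) :=
  stmt_16_general Ψ
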